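/- arXiv:2310.19242 — 10 statements merged into one kernel-verified Lean document; each statement's English description precedes it below -/
import Mathlib

section
/- Let n ≥ 2 and let G be the edge-colored multigraph encoded by ctr : Fin (n-1) → Fin n. If ctr is injective (all monochromatic spanning stars have pairwise different centers), then Stars-to-Stars holds for G: there exists a decomposition of G into n-1 pairwise edge-disjoint rainbow spanning stars. -/
/-!
Since the `n - 1` centers are distinct, they miss exactly one vertex `r`. For each color `i`, the
`i`-th rainbow star is centered at `ctr i`: it uses the edge `{ctr i, ctr c}` in color `c ≠ i` and
the edge `{ctr i, r}` in color `i`. In color `c` the edges used are `{ctr c, ctr i}` for `i ≠ c`,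
together with `{ctr c, r}`, so each edge of that color is used exactly once.
-/

/-- `w` is a decomposition of the edge-colored multigraph encoded by `ctr` into
`n-1` pairwise edge-disjoint rainbow spanning trees. -/
def IsTreeDecomp (n : ℕ) (ctr : Fin (n-1) → Fin n)
    (w : Fin (n-1) → Fin (n-1) → Fin n) : Prop :=
  (∀ i c, w i c ≠ ctr c) ∧
  (∀ c, Function.Injective (fun i => w i c)) ∧
  (∀ c, ∀ v : Fin n, v ≠ ctr c → ∃ i, w i c = v) ∧
  (∀ i, Function.Injective (fun c => s(ctr c, w i c))) ∧
  (∀ i, (SimpleGraph.fromEdgeSet {e : Sym2 (Fin n) | ∃ c, e = s(ctr c, w i c)}).IsTree)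

/-- `w` is a decomposition into `n-1` pairwise edge-disjoint rainbow spanning stars. -/
def IsStarDecomp (n : ℕ) (ctr : Fin (n-1) → Fin n)
    (w : Fin (n-1) → Fin (n-1) → Fin n) : Prop :=
  IsTreeDecomp n ctr w ∧ ∀ i, ∃ z : Fin n, ∀ c, z ∈ s(ctr c, w i c)

/-- Distinct centers of `n - 1` colors miss exactly one of the `n` vertices. -/
lemma exists_forall_ne_center_and_eq_or (n : ℕ) (hn : 2 ≤ n)
    (ctr : Fin (n-1) → Fin n) (hinj : Function.Injective ctr) :
    ∃ r : Fin n, (∀ c, ctr c ≠ r) ∧ ∀ v, v = r ∨ ∃ c, ctr c = v := by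
  have h : ((Finset.univ.image ctr)ᶜ).card = 1 := by
    rw [Finset.card_compl, Finset.card_image_of_injective _ hinj]
    simp
    omega
  obtain ⟨r, hr⟩ := Finset.card_eq_one.1 h
  have key : ∀ v, (∀ c, ctr c ≠ v) ↔ v = r := fun v => by
    rw [← Finset.mem_singleton, ← hr]
    simp
  refine ⟨r, (key r).2 rfl, fun v => ?_⟩
  by_contra! hv
  exact hv.1 ((key v).1 hv.2)

theorem stars_to_stars_of_injective (n : ℕ) (hn : 2 ≤ n)
    (ctr : Fin (n-1) → Fin n) (hinj : Function.Injective ctr) :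
    ∃ w : Fin (n-1) → Fin (n-1) → Fin n, IsStarDecomp n ctr w := by
  obtain ⟨r, hr, hcov⟩ := exists_forall_ne_center_and_eq_or n hn ctr hinj
  have hinj' : ∀ a b, ctr a = ctr b → a = b := fun a b h => hinj h
  have hr' : ∀ c, r ≠ ctr c := fun c => (hr c).symm
  refine ⟨fun i c => if c = i then r else ctr i, ⟨?_, ?_, ?_, ?_, ?_⟩, ?_⟩
  · intro i c
    grind
  · intro c i j h
    grind
  · intro c v hv
    rcases hcov v with rfl | ⟨i, rfl⟩
    · exact ⟨c, if_pos rfl⟩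
    · exact ⟨i, if_neg (by grind)⟩
  · intro i c d h
    simp only [Sym2.eq_iff] at h
    grind
  · intro i
    convert SimpleGraph.isTree_starGraph (ctr i) using 1
    ext x y
    simp only [SimpleGraph.fromEdgeSet_adj, Set.mem_ofPred_eq, SimpleGraph.starGraph_adj,
      Sym2.eq_iff]
    constructor
    · rintro ⟨⟨c, hc⟩, hxy⟩
      grind
    -- The edge from the center to `v` has color `i` if `v = r`, and color `c` if `v = ctr c`.
    · rintro ⟨hxy, rfl | rfl⟩
      · refine ⟨?_, hxy⟩
        rcases hcov y with rfl | ⟨c, rfl⟩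
        · exact ⟨i, by simp⟩
        · exact ⟨c, by grind⟩
      · refine ⟨?_, hxy⟩
        rcases hcov x with rfl | ⟨c, rfl⟩
        · exact ⟨i, by simp⟩
        · exact ⟨c, by grind⟩
  · refine fun i => ⟨ctr i, fun c => ?_⟩
    rw [Sym2.mem_iff]
    grind
end

section
/- Let n ≥ 2 and let G be the edge-colored multigraph encoded by ctr : Fin (n-1) → Fin n, and suppose ctr is injective. Then the decomposition of G into rainbow spanning stars is unique as an unordered collection: for any two decompositions w and w' of G into n-1 pairwise edge-disjoint rainbow spanning stars, there exists a permutation σ of Fin (n-1) such that w' i c = w (σ i) c for all i and c. -/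
/-- An injective choice of `n - 1` centers in `Fin n` misses exactly one vertex. -/
lemma exists_unique_non_center (n : ℕ) (hn : 2 ≤ n)
    (ctr : Fin (n-1) → Fin n) (hinj : Function.Injective ctr) :
    ∃ v₀ : Fin n, (∀ c, ctr c ≠ v₀) ∧ ∀ v, v ≠ v₀ → ∃ c, ctr c = v := by
  have hcard : ((Finset.univ.image ctr)ᶜ).card = 1 := by
    rw [Finset.card_compl, Finset.card_image_of_injective _ hinj]
    simp only [Fintype.card_fin, Finset.card_univ]
    omega
  obtain ⟨v₀, hv₀⟩ := Finset.card_eq_one.mp hcard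
  have key : ∀ v, (¬ ∃ c, ctr c = v) ↔ v = v₀ := by
    intro v
    have := congrArg (fun s => v ∈ s) hv₀
    simpa using this
  refine ⟨v₀, fun c hc => (key v₀).mpr rfl ⟨c, hc⟩, fun v hv => ?_⟩
  by_contra h
  exact hv ((key v).mp h)

/-- Normal form of a star decomposition: up to a relabelling `τ` of the stars, the star `i` is
centered at `ctr (τ i)`, and its edge of color `τ i` goes to the vertex `v₀` that is not a
center. -/
lemma star_decomp_normal_form (n : ℕ)
    (ctr : Fin (n-1) → Fin n) (hinj : Function.Injective ctr) (v₀ : Fin n)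
    (hv₀ : ∀ c, ctr c ≠ v₀) (huniq : ∀ v, v ≠ v₀ → ∃ c, ctr c = v)
    (w : Fin (n-1) → Fin (n-1) → Fin n) (hw : IsStarDecomp n ctr w) :
    ∃ τ : Equiv.Perm (Fin (n-1)), ∀ i c, w i c = if c = τ i then v₀ else ctr (τ i) := by
  obtain ⟨⟨hne, hcol, -, hrain, -⟩, hstar⟩ := hw
  -- Away from the colors centered at `z`, the row of a star with center `z` is constant.
  have hleaf : ∀ i z, (∀ c, z ∈ s(ctr c, w i c)) → ∀ c, ctr c ≠ z → w i c = z := by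
    intro i z hz c hc
    rcases Sym2.mem_iff.mp (hz c) with h | h
    · exact absurd h.symm hc
    · exact h.symm
  -- A star centered at `ctr d` must use the edge from `ctr d` to `v₀` in color `d`: its other
  -- edges already join `ctr d` to every other center.
  have hown : ∀ i d, (∀ c, ctr d ∈ s(ctr c, w i c)) → w i d = v₀ := by
    intro i d hd
    by_contra h
    obtain ⟨e, he⟩ := huniq _ h
    have hed : ctr e ≠ ctr d := fun h' => hne i d (he.symm.trans h')
    have hwe := hleaf i _ hd e hed
    have hde : d = e := hrain i (by
      change s(ctr d, w i d) = s(ctr e, w i e)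
      rw [hwe, ← he, Sym2.eq_swap])
    exact hed (by rw [hde])
  have hex : ∀ i, ∃ d, w i d = v₀ := by
    intro i
    obtain ⟨z, hz⟩ := hstar i
    by_cases hzv : z = v₀
    · subst hzv
      -- `Fin (n - 1)` is inhabited by `i` itself, and every color meets `v₀` here.
      exact ⟨i, hleaf i _ hz i (hv₀ i)⟩
    · obtain ⟨d, rfl⟩ := huniq z hzv
      exact ⟨d, hown i d hz⟩
  choose τ hτ using hex
  have hτinj : Function.Injective τ := by
    intro i j hij
    refine hcol (τ i) ?_
    change w i (τ i) = w j (τ i)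
    rw [hτ i, hij, hτ j]
  have hτbij : Function.Bijective τ := Finite.injective_iff_bijective.mp hτinj
  refine ⟨Equiv.ofBijective τ hτbij, fun i c => ?_⟩
  rw [Equiv.ofBijective_apply]
  split_ifs with hc
  · rw [hc, hτ i]
  · obtain ⟨z, hz⟩ := hstar i
    by_cases hzv : z = v₀
    · -- The star that owns color `c` would share its edge `s(ctr c, v₀)` with star `i`.
      obtain ⟨j, rfl⟩ := hτbij.2 c
      have hi : w i (τ j) = v₀ := by
        subst hzv
        exact hleaf i _ hz _ (hv₀ _)
      have hij : i = j := hcol (τ j) (hi.trans (hτ j).symm)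
      exact absurd (by rw [hij]) hc
    · obtain ⟨d, rfl⟩ := huniq z hzv
      have hd : τ i = d := by
        by_contra h
        have h' := hleaf i _ hz (τ i) (fun h' => h (hinj h'))
        exact hv₀ d (h'.symm.trans (hτ i))
      subst hd
      exact hleaf i _ hz c (fun h' => hc (hinj h'))

theorem star_decomp_unique_of_injective (n : ℕ) (hn : 2 ≤ n)
    (ctr : Fin (n-1) → Fin n) (hinj : Function.Injective ctr)
    (w w' : Fin (n-1) → Fin (n-1) → Fin n)
    (hw : IsStarDecomp n ctr w) (hw' : IsStarDecomp n ctr w') :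
    ∃ σ : Equiv.Perm (Fin (n-1)), ∀ i c, w' i c = w (σ i) c := by
  obtain ⟨v₀, hv₀, huniq⟩ := exists_unique_non_center n hn ctr hinj
  obtain ⟨τ, hτ⟩ := star_decomp_normal_form n ctr hinj v₀ hv₀ huniq w hw
  obtain ⟨τ', hτ'⟩ := star_decomp_normal_form n ctr hinj v₀ hv₀ huniq w' hw'
  refine ⟨τ'.trans τ.symm, fun i c => ?_⟩
  rw [hτ, hτ']
  simp
end

section
/- Let n ≥ 2 and let G be the edge-colored multigraph encoded by ctr : Fin (n-1) → Fin n. If ctr is constant (all monochromatic spanning stars have the same center), then Stars-to-Stars holds for G: there exists a decomposition of G into n-1 pairwise edge-disjoint rainbow spanning stars. -/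
theorem stars_to_stars_of_constant (n : ℕ) (hn : 2 ≤ n)
    (ctr : Fin (n-1) → Fin n) (z : Fin n) (hconst : ∀ c, ctr c = z) :
    ∃ w : Fin (n-1) → Fin (n-1) → Fin n, IsStarDecomp n ctr w := by
  obtain ⟨m, rfl⟩ : ∃ m, n = m + 1 + 1 := ⟨n - 2, by omega⟩
  obtain rfl : ctr = fun _ => z := funext hconst
  -- `m + 1 + 1 - 1` is definitionally `m + 1`, whose `Fin` carries the group structure.
  let w : Fin (m + 1) → Fin (m + 1) → Fin (m + 1 + 1) := fun i c => z.succAbove (i + c)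
  have hrow : ∀ i v, v ≠ z → ∃ c, w i c = v := by
    intro i v hv
    obtain ⟨j, rfl⟩ := Fin.exists_succAbove_eq hv
    exact ⟨j - i, by simp [w]⟩
  refine ⟨w, ⟨fun i c => Fin.succAbove_ne z _, ?_, ?_, ?_, ?_⟩, fun i => ⟨z, fun c => by simp⟩⟩
  · intro c i j h
    exact add_right_cancel (Fin.succAbove_right_injective h)
  · intro (c : Fin (m + 1)) v hv
    obtain ⟨j, rfl⟩ := Fin.exists_succAbove_eq hv
    exact ⟨j - c, congrArg z.succAbove (sub_add_cancel j c)⟩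
  · intro i c d h
    exact add_left_cancel (Fin.succAbove_right_injective (Sym2.congr_right.mp h))
  · intro i
    convert SimpleGraph.isTree_starGraph z using 1
    ext x y
    rw [SimpleGraph.fromEdgeSet_adj, SimpleGraph.starGraph_adj, and_comm]
    refine and_congr_right fun hxy => ⟨?_, ?_⟩
    · rintro ⟨c, hc⟩
      rcases Sym2.eq_iff.mp hc with h | h
      · exact Or.inl h.1
      · exact Or.inr h.2
    · rintro (rfl | rfl)
      · obtain ⟨c, hc⟩ := hrow i y hxy.symm
        exact ⟨c, by rw [hc]⟩
      · obtain ⟨c, hc⟩ := hrow i x hxy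
        exact ⟨c, by rw [hc, Sym2.eq_swap]⟩
end

section
/- Let n ≥ 2 and let G be the edge-colored multigraph encoded by ctr : Fin (n-1) → Fin n, and suppose ctr is constant. Then the number of decompositions of G into n-1 pairwise edge-disjoint rainbow spanning stars (as ordered families w indexed by Fin (n-1)) equals L (n-1), the number of Latin squares of order n-1. -/
/-- A Latin square of order `m`. -/
def IsLatinSquare {m : ℕ} (M : Fin m → Fin m → Fin m) : Prop :=
  (∀ i, Function.Bijective (M i)) ∧ (∀ j, Function.Bijective (fun i => M i j))

/-- `L m` is the number of Latin squares of order `m`. -/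
noncomputable def L (m : ℕ) : ℕ := Nat.card {M : Fin m → Fin m → Fin m // IsLatinSquare M}

/-- A set of edges joining `z` to each other vertex spans the star graph at `z`. -/
theorem isTree_of_surjective {V ι : Type*} (z : V) (e : ι → {v : V // v ≠ z})
    (he : Function.Surjective e) :
    (SimpleGraph.fromEdgeSet {x : Sym2 V | ∃ c, x = s(z, (e c).1)}).IsTree := by
  have h : SimpleGraph.fromEdgeSet {x : Sym2 V | ∃ c, x = s(z, (e c).1)}
      = SimpleGraph.starGraph z := by
    ext a b
    rw [SimpleGraph.fromEdgeSet_adj, SimpleGraph.starGraph_adj, and_comm]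
    refine and_congr_right fun hab => ⟨?_, ?_⟩
    · rintro ⟨c, hc⟩
      rcases Sym2.eq_iff.mp hc with h | h
      · exact .inl h.1
      · exact .inr h.2
    · rintro (rfl | rfl)
      · obtain ⟨c, hc⟩ := he ⟨b, hab.symm⟩
        exact ⟨c, by rw [hc]⟩
      · obtain ⟨c, hc⟩ := he ⟨a, hab⟩
        exact ⟨c, by rw [hc, Sym2.eq_swap]⟩
  rw [h]
  exact SimpleGraph.isTree_starGraph z

/-- Relabelling the non-central vertices by `Fin (n-1)` turns star decompositions into Latin
squares. -/
theorem isStarDecomp_iff_isLatinSquare {n : ℕ} {ctr : Fin (n-1) → Fin n} {z : Fin n}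
    (hconst : ∀ c, ctr c = z) (e : Fin (n-1) ≃ {v : Fin n // v ≠ z})
    (M : Fin (n-1) → Fin (n-1) → Fin (n-1)) :
    IsStarDecomp n ctr (fun i c => (e (M i c)).1) ↔ IsLatinSquare M := by
  obtain rfl : ctr = fun _ => z := funext hconst
  constructor
  · rintro ⟨⟨-, hcol, -, hrow, -⟩, -⟩
    refine ⟨fun i => Finite.injective_iff_bijective.mp fun a b hab => hrow i ?_,
      fun j => Finite.injective_iff_bijective.mp fun a b hab => hcol j ?_⟩
    · simp only [hab]
    · exact congrArg (fun k => (e k).1) hab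
  · rintro ⟨hrow, hcol⟩
    refine ⟨⟨fun i c => (e (M i c)).2, fun c a b hab => (hcol c).1 ?_, fun c v hv => ?_,
      fun i a b hab => (hrow i).1 ?_, fun i => ?_⟩, fun i => ⟨z, fun c => Sym2.mem_mk_left _ _⟩⟩
    · exact e.injective (Subtype.ext hab)
    · obtain ⟨i, hi⟩ := (hcol c).2 (e.symm ⟨v, hv⟩)
      exact ⟨i, by simp only at hi; simp [hi]⟩
    · exact e.injective (Subtype.ext (Sym2.congr_right.mp hab))
    · exact isTree_of_surjective z (fun c => e (M i c)) (e.surjective.comp (hrow i).2)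

theorem card_star_decomps_of_constant (n : ℕ) (hn : 2 ≤ n)
    (ctr : Fin (n-1) → Fin n) (z : Fin n) (hconst : ∀ c, ctr c = z) :
    Nat.card {w : Fin (n-1) → Fin (n-1) → Fin n // IsStarDecomp n ctr w} = L (n-1) := by
  have e : Fin (n-1) ≃ {v : Fin n // v ≠ z} := Fintype.equivOfCardEq (by simp)
  symm
  refine Nat.card_congr (Equiv.ofBijective
    (fun M : {M : Fin (n-1) → Fin (n-1) → Fin (n-1) // IsLatinSquare M} =>
      (⟨fun i c => (e (M.1 i c)).1, (isStarDecomp_iff_isLatinSquare hconst e M.1).mpr M.2⟩ :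
        {w : Fin (n-1) → Fin (n-1) → Fin n // IsStarDecomp n ctr w})) ⟨?_, ?_⟩)
  · intro M N h
    ext1
    funext i c
    exact e.injective (Subtype.ext (congrFun (congrFun (congrArg Subtype.val h) i) c))
  · rintro ⟨w, hw⟩
    have hz : ∀ i c, w i c ≠ z := fun i c => hconst c ▸ hw.1.1 i c
    have hM : (fun i c => (e (e.symm ⟨w i c, hz i c⟩)).1) = w := by simp
    exact ⟨⟨fun i c => e.symm ⟨w i c, hz i c⟩,
      (isStarDecomp_iff_isLatinSquare hconst e _).mp (hM.symm ▸ hw)⟩, Subtype.ext hM⟩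
end

section
/- Let n ≥ 2 and let G be the edge-colored multigraph encoded by ctr : Fin (n-1) → Fin n. If the range of ctr has at most two elements (every monochromatic spanning star is centered at one of two fixed vertices), then there exists a decomposition of G into n-1 pairwise edge-disjoint rainbow spanning trees. -/
/-- An enumeration of the vertices other than `a`, starting with `b`: the symbols of the Latin
square, with `0` standing for the edge `ab`. -/
theorem exists_enum {k : ℕ} {a b : Fin (k + 2)} (h : a ≠ b) :
    ∃ f : Fin (k + 1) → Fin (k + 2), Function.Injective f ∧ f 0 = b ∧ (∀ x, f x ≠ a) ∧
      ∀ v, v ≠ a → ∃ x, f x = v := by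
  have key : ∀ v, v ≠ a → Equiv.swap b (a.succAbove 0) v ≠ a := by
    intro v hv
    have := Fin.succAbove_ne a 0
    rw [Equiv.swap_apply_def]
    split_ifs <;> first | assumption | exact h.symm
  refine ⟨fun x => Equiv.swap b (a.succAbove 0) (a.succAbove x),
    (Equiv.injective _).comp Fin.succAbove_right_injective, Equiv.swap_apply_right _ _,
    fun x => key _ (Fin.succAbove_ne a x), fun v hv => ?_⟩
  obtain ⟨x, hx⟩ := Fin.exists_succAbove_eq (key v hv)
  exact ⟨x, by simp [hx]⟩

/-- The tree criterion: `n - 1` edges, each joining `a` or `b` to another vertex, form a spanning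
tree if they are pairwise distinct, one of them is `ab`, and every vertex outside `{a, b}` is
covered. -/
theorem isTree_of_two_centers {k : ℕ} {a b : Fin (k + 2)} (ctr u : Fin (k + 1) → Fin (k + 2))
    (hab : ∀ c, ctr c = a ∨ ctr c = b) (hne : ∀ c, u c ≠ ctr c)
    (hinj : Function.Injective fun c => s(ctr c, u c)) (h₀ : ∃ c, s(a, b) = s(ctr c, u c))
    (hcov : ∀ v, v ≠ a → v ≠ b → ∃ c, u c = v) :
    (SimpleGraph.fromEdgeSet {e : Sym2 (Fin (k + 2)) | ∃ c, e = s(ctr c, u c)}).IsTree := by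
  set G := SimpleGraph.fromEdgeSet {e : Sym2 (Fin (k + 2)) | ∃ c, e = s(ctr c, u c)} with hG
  have hadj : ∀ c, G.Adj (ctr c) (u c) := fun c =>
    (SimpleGraph.fromEdgeSet_adj _).2 ⟨⟨c, rfl⟩, (hne c).symm⟩
  have hb : G.Reachable a b := by
    obtain ⟨c, hc⟩ := h₀
    have h : s(a, b) ∈ G.edgeSet := hc ▸ hadj c
    exact SimpleGraph.Adj.reachable h
  have hreach : ∀ v, G.Reachable a v := by
    intro v
    by_cases hva : v = a
    · exact hva ▸ .refl _
    by_cases hvb : v = b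
    · exact hvb ▸ hb
    obtain ⟨c, rfl⟩ := hcov v hva hvb
    rcases hab c with h | h
    · exact h ▸ (hadj c).reachable
    · exact hb.trans (h ▸ (hadj c).reachable)
  rw [SimpleGraph.isTree_iff_connected_and_card]
  refine ⟨⟨fun v w => (hreach v).symm.trans (hreach w)⟩, ?_⟩
  have hE : G.edgeSet = Set.range fun c => s(ctr c, u c) := by
    ext e
    constructor
    · intro he
      rw [hG, SimpleGraph.edgeSet_fromEdgeSet] at he
      obtain ⟨c, hc⟩ := he.1
      exact ⟨c, hc.symm⟩
    · rintro ⟨c, rfl⟩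
      exact hadj c
  rw [hE, Nat.card_range_of_injective hinj]
  simp

/-- The case of two distinct centres. In tree `i`, colour `c` carries the symbol `f (c - i)`. This
symbol is the end of the edge when the centre is `a`; when the centre is `b`, the symbol `b` must
instead mean the end `a`, which is what `Equiv.swap a b` accomplishes. -/
theorem exists_isTreeDecomp_of_ne {k : ℕ} (ctr : Fin (k + 1) → Fin (k + 2)) {a b : Fin (k + 2)}
    (h : a ≠ b) (hab : ∀ c, ctr c = a ∨ ctr c = b) :
    ∃ w : Fin (k + 1) → Fin (k + 1) → Fin (k + 2), IsTreeDecomp (k + 2) ctr w := by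
  obtain ⟨f, hf, hf0, hfa, hfs⟩ := exists_enum h
  obtain ⟨w, hw⟩ : ∃ w : Fin (k + 1) → Fin (k + 1) → Fin (k + 2),
      ∀ i c, w i c = Equiv.swap a (ctr c) (f (c - i)) := ⟨_, fun _ _ => rfl⟩
  have hne : ∀ i c, w i c ≠ ctr c := by
    intro i c hc
    rw [hw, ← Equiv.eq_symm_apply, Equiv.symm_swap, Equiv.swap_apply_right] at hc
    exact hfa _ hc
  have hedge : ∀ i c, s(ctr c, w i c) =
      if f (c - i) = b then s(a, b) else s(ctr c, f (c - i)) := by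
    intro i c
    have := hfa (c - i)
    rw [hw]
    rcases hab c with hc | hc
    · rw [hc, Equiv.swap_self]
      split_ifs with hx <;> simp [hx]
    · rw [hc]
      split_ifs with hx
      · rw [hx, Equiv.swap_apply_right, Sym2.eq_swap]
      · rw [Equiv.swap_apply_of_ne_of_ne this hx]
  have hinj : ∀ i, Function.Injective fun c => s(ctr c, w i c) := by
    intro i c d hcd
    -- The symbol can be read off from the edge.
    have hx : f (c - i) = f (d - i) := by
      have h1 := hfa (c - i)
      have h2 := hfa (d - i)
      simp only [hedge] at hcd
      have h3 := hab c
      have h4 := hab d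
      split_ifs at hcd <;> simp only [Sym2.eq_iff] at hcd <;> grind
    exact sub_left_injective (hf hx)
  have hcol : ∀ c, Function.Injective fun i => w i c := by
    intro c i j hij
    simp only [hw] at hij
    exact sub_right_injective (hf (Equiv.injective _ hij))
  -- The binder types replace `Fin (k + 2 - 1)`, on which `Fin` arithmetic is not available.
  refine ⟨w, hne, hcol, ?_, hinj, fun (i : Fin (k + 1)) => ?_⟩
  · intro (c : Fin (k + 1)) v hv
    obtain ⟨x, hx⟩ := hfs (Equiv.swap a (ctr c) v) (by
      rw [Ne, ← Equiv.eq_symm_apply, Equiv.symm_swap, Equiv.swap_apply_left]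
      exact hv)
    exact ⟨c - x, by rw [hw, sub_sub_cancel, hx, Equiv.swap_apply_self]⟩
  · refine isTree_of_two_centers ctr (w i) hab (hne i) (hinj i) ⟨i, ?_⟩ fun v hva hvb => ?_
    · rw [hedge, sub_self, if_pos hf0]
    · obtain ⟨x, hx⟩ := hfs v hva
      refine ⟨x + i, ?_⟩
      rw [hw, add_sub_cancel_right, hx, Equiv.swap_apply_of_ne_of_ne hva]
      rcases hab (x + i) with hc | hc <;> rwa [hc]

theorem stars_to_trees_of_two_centers (n : ℕ) (hn : 2 ≤ n)
    (ctr : Fin (n-1) → Fin n) (a b : Fin n) (hab : ∀ c, ctr c = a ∨ ctr c = b) :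
    ∃ w : Fin (n-1) → Fin (n-1) → Fin n, IsTreeDecomp n ctr w := by
  obtain ⟨k, rfl⟩ := Nat.exists_eq_add_of_le' hn
  by_cases h : a = b
  · obtain ⟨b', hb'⟩ := exists_ne a
    exact exists_isTreeDecomp_of_ne ctr hb'.symm fun c => .inl ((hab c).elim id (·.trans h.symm))
  · exact exists_isTreeDecomp_of_ne ctr h hab
end

section
/- Let n ≥ 2 and let G be the edge-colored multigraph encoded by ctr : Fin (n-1) → Fin n. Then Stars-to-Stars holds for G if and only if ctr is constant or ctr is injective; that is, a decomposition of G into n-1 pairwise edge-disjoint rainbow spanning stars exists if and only if all the monochromatic spanning stars share the same center or all have pairwise different centers. -/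
/-- An injection from an `(n-1)`-element set into `Fin n` that misses `z` hits everything else. -/
lemma exists_eq_of_injective_of_ne {n : ℕ} {z : Fin n} {f : Fin (n-1) → Fin n}
    (hf : Function.Injective f) (hz : ∀ c, f c ≠ z) (v : Fin n) (hv : v ≠ z) : ∃ c, f c = v := by
  have h := Finset.surjOn_of_injOn_of_card_le (s := Finset.univ) (t := Finset.univ.erase z) f
    (fun c _ => by simpa using hz c) hf.injOn (by simp)
  obtain ⟨c, -, hc⟩ := h (show v ∈ _ by simpa using hv)
  exact ⟨c, hc⟩

/-- A family of rainbow spanning stars, the `i`-th one having center `z i` and the vertex `f i c`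
as the leaf of its edge of color `c`, is a decomposition as soon as no star repeats a leaf and no
edge is used by two stars: counting turns both injectivity conditions into bijectivity. -/
lemma isStarDecomp_of_leaves {n : ℕ} {ctr : Fin (n-1) → Fin n}
    {w : Fin (n-1) → Fin (n-1) → Fin n} (z : Fin (n-1) → Fin n)
    (f : Fin (n-1) → Fin (n-1) → Fin n) (hf : ∀ i, Function.Injective (f i))
    (hz : ∀ i c, f i c ≠ z i) (he : ∀ i c, s(ctr c, w i c) = s(z i, f i c))
    (hw : ∀ i c, w i c ≠ ctr c) (hinj : ∀ c, Function.Injective (fun i => w i c)) :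
    IsStarDecomp n ctr w := by
  refine ⟨⟨hw, hinj, fun c v hv => ?_, fun i c c' h => ?_, fun i => ?_⟩, fun i => ⟨z i, fun c => ?_⟩⟩
  · exact exists_eq_of_injective_of_ne (hinj c) (fun i => hw i c) v hv
  · simp only [he] at h
    exact hf i (Sym2.congr_right.mp h)
  · convert SimpleGraph.isTree_starGraph (z i) using 1
    ext x y
    simp only [he, SimpleGraph.fromEdgeSet_adj, Set.mem_ofPred_eq, SimpleGraph.starGraph_adj,
      Sym2.eq_iff]
    constructor
    · grind
    · rintro ⟨hxy, rfl | rfl⟩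
      · obtain ⟨c, hc⟩ := exists_eq_of_injective_of_ne (hf i) (hz i) y hxy.symm
        exact ⟨⟨c, Or.inl ⟨rfl, hc.symm⟩⟩, hxy⟩
      · obtain ⟨c, hc⟩ := exists_eq_of_injective_of_ne (hf i) (hz i) x hxy
        exact ⟨⟨c, Or.inr ⟨hc.symm, rfl⟩⟩, hxy⟩
  · rw [he]
    exact Sym2.mem_mk_left _ _

lemma exists_isStarDecomp_of_const {n : ℕ} (hn : 2 ≤ n) {ctr : Fin (n-1) → Fin n} {z : Fin n}
    (hz : ∀ c, ctr c = z) : ∃ w, IsStarDecomp n ctr w := by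
  obtain ⟨m, rfl⟩ := Nat.exists_eq_add_of_le' hn
  change Fin (m + 1) → _ at ctr
  let w : Fin (m + 1) → Fin (m + 1) → Fin (m + 2) := fun i c => z.succAbove (i + c)
  refine ⟨w, isStarDecomp_of_leaves (fun _ => z) w ?_ ?_ ?_ ?_ ?_⟩
  · exact fun i => Fin.succAbove_right_injective.comp (add_right_injective (G := Fin (m + 1)) i)
  · exact fun i c => Fin.succAbove_ne _ _
  · exact fun i c => by rw [hz]
  · exact fun i c => by rw [hz]; exact Fin.succAbove_ne _ _
  · exact fun c => Fin.succAbove_right_injective.comp (add_left_injective (G := Fin (m + 1)) c)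

lemma exists_isStarDecomp_of_injective {n : ℕ} (hn : 2 ≤ n) {ctr : Fin (n-1) → Fin n}
    (hctr : Function.Injective ctr) : ∃ w, IsStarDecomp n ctr w := by
  obtain ⟨m, hm⟩ : ∃ m, ∀ c, ctr c ≠ m := by
    by_contra! h
    have := Fintype.card_le_of_surjective ctr h
    simp only [Fintype.card_fin] at this
    omega
  refine ⟨fun i c => if c = i then m else ctr i, isStarDecomp_of_leaves ctr
    (fun i c => if c = i then m else ctr c) ?_ ?_ ?_ ?_ ?_⟩
  · intro i c c' h
    grind [Function.Injective]
  · grind [Function.Injective]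
  · intro i c
    by_cases h : c = i
    · simp [h]
    · simp [h, Sym2.eq_swap]
  · grind [Function.Injective]
  · intro c i i' h
    grind [Function.Injective]

theorem stars_to_stars_iff (n : ℕ) (hn : 2 ≤ n) (ctr : Fin (n-1) → Fin n) :
    (∃ w : Fin (n-1) → Fin (n-1) → Fin n, IsStarDecomp n ctr w) ↔
      ((∃ z : Fin n, ∀ c, ctr c = z) ∨ Function.Injective ctr) := by
  constructor
  · rintro ⟨w, ⟨-, hinj, -, hrain, -⟩, hstar⟩
    by_contra! ⟨hconst, hctr⟩
    obtain ⟨a, b, hab, hne⟩ := Function.not_injective_iff.mp hctr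
    have hcenter : ∀ i x, (∀ c, x ∈ s(ctr c, w i c)) → x = ctr a := by
      intro i x hx
      by_contra hxa
      have ha := (Sym2.mem_iff.mp (hx a)).resolve_left hxa
      have hb := (Sym2.mem_iff.mp (hx b)).resolve_left (hab ▸ hxa)
      exact hne (hrain i (by simp only [← ha, ← hb, hab]))
    obtain ⟨d, hd⟩ := hconst (ctr a)
    have hwd : ∀ i, w i d = ctr a := by
      intro i
      obtain ⟨x, hx⟩ := hstar i
      have hxa := hcenter i x hx
      exact ((Sym2.mem_iff.mp (hxa ▸ hx d)).resolve_left hd.symm).symm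
    -- The colors `a ≠ b` also serve as two different star indices.
    exact hne (hinj d ((hwd a).trans (hwd b).symm))
  · rintro (⟨z, hz⟩ | hctr)
    · exact exists_isStarDecomp_of_const hn hz
    · exact exists_isStarDecomp_of_injective hn hctr
end

section
/- Let n ≥ 3 and let G be the edge-colored multigraph encoded by ctr : Fin (n-1) → Fin n. Suppose w is a decomposition of G into n-1 pairwise edge-disjoint rainbow spanning stars, and for each i let z i be the unique vertex belonging to all of the pairs {ctr c, w i c} for c : Fin (n-1) (unique since n-1 ≥ 2). Then for every vertex k : Fin n, the number of indices i with z i = k equals the number of colors c with ctr c = k. -/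
/-- The degree of `k` in a spanning star of `Fin n` with center `z`, the star being given by its
`n - 1` distinct edges `f j`. -/
theorem card_mem_star {n : ℕ} (hn : 3 ≤ n) (f : Fin (n-1) → Sym2 (Fin n))
    (hf : Function.Injective f) (hd : ∀ j, ¬ (f j).IsDiag) (z : Fin n) (hz : ∀ j, z ∈ f j)
    (k : Fin n) :
    (∑ j, if k ∈ f j then 1 else 0) = 1 + (if z = k then n - 2 else 0) := by
  by_cases hk : z = k
  · subst hk
    simp only [hz, if_true, Finset.sum_const, Finset.card_univ, Fintype.card_fin, smul_eq_mul]
    omega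
  · -- `o j` is the leaf of the edge `f j`
    choose o ho using fun j => Sym2.mem_iff_exists.1 (hz j)
    have hoz : ∀ j, o j ≠ z := fun j h => hd j (by rw [ho j, h]; simp)
    -- there are as many edges as vertices other than `z`, so `o` is onto these vertices
    have hb : Function.Bijective (fun j => (⟨o j, hoz j⟩ : {v : Fin n // v ≠ z})) := by
      rw [Fintype.bijective_iff_injective_and_card]
      refine ⟨fun i j h => hf ?_, by simp [Fintype.card_subtype_compl]⟩
      rw [ho i, ho j, show o i = o j from Subtype.ext_iff.1 h]
    obtain ⟨j₀, hj₀⟩ := hb.2 ⟨k, Ne.symm hk⟩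
    have hj₀' : o j₀ = k := Subtype.ext_iff.1 hj₀
    have key : ∀ j, k ∈ f j ↔ j = j₀ := by
      intro j
      rw [ho j, Sym2.mem_iff]
      constructor
      · rintro (h | h)
        · exact absurd h.symm hk
        · exact hb.1 (Subtype.ext (by simp [hj₀', h]))
      · rintro rfl
        exact Or.inr hj₀'.symm
    simp [key, hk]

theorem card_star_centers_eq (n : ℕ) (hn : 3 ≤ n)
    (ctr : Fin (n-1) → Fin n)
    (w : Fin (n-1) → Fin (n-1) → Fin n) (hw : IsStarDecomp n ctr w)
    (z : Fin (n-1) → Fin n) (hz : ∀ i c, z i ∈ s(ctr c, w i c)) :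
    ∀ k : Fin n,
      (Finset.univ.filter (fun i => z i = k)).card =
      (Finset.univ.filter (fun c => ctr c = k)).card := by
  intro k
  obtain ⟨⟨hne, hinj, -, hrow, -⟩, -⟩ := hw
  have hd : ∀ i c, ¬ (s(ctr c, w i c)).IsDiag := fun i c h => hne i c (by simpa using h.symm)
  have h1 := fun i => card_mem_star hn (fun c => s(ctr c, w i c)) (hrow i) (hd i) (z i) (hz i) k
  have h2 := fun c => card_mem_star hn (fun i => s(ctr c, w i c))
    (fun i j h => hinj c (Sym2.congr_right.1 h)) (fun i => hd i c) (ctr c)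
    (fun i => Sym2.mem_mk_left _ _) k
  -- the degree of `k` in `G`, summed over the stars `i` and over the colors `c`
  have h := Finset.sum_comm (s := Finset.univ) (t := Finset.univ)
    (f := fun i c => if k ∈ s(ctr c, w i c) then 1 else 0)
  rw [Finset.sum_congr rfl fun i _ => h1 i, Finset.sum_congr rfl fun c _ => h2 c,
    Finset.sum_add_distrib, Finset.sum_add_distrib, ← Finset.sum_filter, ← Finset.sum_filter,
    Finset.sum_const, Finset.sum_const, Finset.sum_const, smul_eq_mul, smul_eq_mul] at h
  exact Nat.eq_of_mul_eq_mul_right (by omega) (Nat.add_left_cancel h)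
end

section
/- Let n ≥ 3 and let G be the edge-colored multigraph encoded by ctr : Fin (n-1) → Fin n. If a decomposition of G into n-1 pairwise edge-disjoint rainbow spanning stars exists, then for every vertex k : Fin n, the number s_k of colors c with ctr c = k satisfies s_k = 0 or s_k = 1 or s_k = n-1. -/
theorem center_multiplicity_of_star_decomp (n : ℕ) (hn : 3 ≤ n)
    (ctr : Fin (n-1) → Fin n)
    (hex : ∃ w : Fin (n-1) → Fin (n-1) → Fin n, IsStarDecomp n ctr w) :
    ∀ k : Fin n,
      (Finset.univ.filter (fun c => ctr c = k)).card = 0 ∨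
      (Finset.univ.filter (fun c => ctr c = k)).card = 1 ∨
      (Finset.univ.filter (fun c => ctr c = k)).card = n - 1 := by
  obtain ⟨w, ⟨-, hinj, -, hrainbow, -⟩, hstar⟩ := hex
  intro k
  by_cases hk : (Finset.univ.filter (fun c => ctr c = k)).card ≤ 1
  · omega
  obtain ⟨c, hc, d, hd, hcd⟩ := Finset.one_lt_card.mp (not_le.mp hk)
  simp only [Finset.mem_filter, Finset.mem_univ, true_and] at hc hd
  have hcenter : ∀ i e, k ∈ s(ctr e, w i e) := by
    intro i e
    obtain ⟨z, hz⟩ := hstar i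
    suffices h : z = k from h ▸ hz e
    by_contra hzk
    have hwc : z = w i c := (Sym2.mem_iff.mp (hz c)).resolve_left (hc ▸ hzk)
    have hwd : z = w i d := (Sym2.mem_iff.mp (hz d)).resolve_left (hd ▸ hzk)
    refine hcd (hrainbow i ?_)
    simp only [hc, hd, ← hwc, ← hwd]
  have hall : ∀ e, ctr e = k := by
    intro e
    by_contra hek
    have hw : ∀ i, k = w i e := fun i =>
      (Sym2.mem_iff.mp (hcenter i e)).resolve_left (Ne.symm hek)
    -- The colors `c ≠ d` also serve as the indices of two distinct stars.
    exact hcd (hinj e ((hw c).symm.trans (hw d)))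
  right; right
  simp [hall]
end

section
/- Let n = 4 and define ctr : Fin 3 → Fin 4 by ctr 0 = 0, ctr 1 = 0, ctr 2 = 1 (two monochromatic spanning stars centered at vertex 0 and one centered at vertex 1). Then no decomposition of the resulting edge-colored multigraph G into 3 pairwise edge-disjoint rainbow spanning stars exists; i.e., Stars-to-Stars fails for G. -/
theorem stars_to_stars_fails_example :
    ¬ ∃ w : Fin (4-1) → Fin (4-1) → Fin 4,
        IsStarDecomp 4 (![0, 0, 1] : Fin (4-1) → Fin 4) w := by
  rintro ⟨w, ⟨-, hinj, -, hrb, -⟩, hstar⟩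
  have key : ∀ i, w i 2 = 0 := by
    intro i
    obtain ⟨z, hz⟩ := hstar i
    have h0 : z = 0 ∨ z = w i 0 := Sym2.mem_iff.mp (hz 0)
    have h1 : z = 0 ∨ z = w i 1 := Sym2.mem_iff.mp (hz 1)
    have h2 : z = 1 ∨ z = w i 2 := Sym2.mem_iff.mp (hz 2)
    have hne : w i 0 ≠ w i 1 := by
      intro h
      have h01 : (0 : Fin (4-1)) = 1 := hrb i (congrArg (fun v => s((0 : Fin 4), v)) h)
      exact absurd h01 (by decide)
    have hz0 : z = 0 := by
      rcases h0 with h | h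
      · exact h
      · rcases h1 with h' | h'
        · exact h'
        · exact absurd (h.symm.trans h') hne
    subst hz0
    rcases h2 with h | h
    · exact absurd h (by decide)
    · exact h.symm
  have h01 : (0 : Fin (4-1)) = 1 := hinj 2 ((key 0).trans (key 1).symm)
  exact absurd h01 (by decide)
end

section
/- Consider the edge-colored multigraph on Fin 4 whose three color classes are the spanning paths E₀ = { {0,2}, {2,3}, {1,3} }, E₁ = { {0,1}, {1,2}, {2,3} }, E₂ = { {0,3}, {1,2}, {2,3} }. Then there is no decomposition of this graph into 3 pairwise edge-disjoint rainbow spanning paths: no function p : Fin 3 → Fin 3 → Sym2 (Fin 4) exists such that p i c ∈ E_c for all i and c, for each c the map i ↦ p i c is a bijection from Fin 3 onto E_c, and for each i the three pairs p i 0, p i 1, p i 2 form a spanning path on Fin 4. -/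
/-!
The color-1 edge `{2, 3}` lies in no rainbow spanning path, whereas a decomposition would have to
use it. Indeed, such a path would contain `{2, 3}`, one of `{0, 2}, {2, 3}, {1, 3}` and one of
`{0, 3}, {1, 2}, {2, 3}`. If `{2, 3}` is repeated, at most two distinct edges remain and vertex
`0` or `1` is isolated. Of the other four combinations, `{0, 2}, {0, 3}` and `{1, 3}, {1, 2}` close
up to a triangle with `{2, 3}`, again isolating `1` or `0`, while `{0, 2}, {1, 2}` and
`{1, 3}, {0, 3}` make a vertex of degree three. So only `IsSpanningPath.exists_mem` (no isolated
vertex) and `IsSpanningPath.not_star` (no vertex of degree three) are needed.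
-/

/-- A set of unordered pairs of vertices forms a spanning path on `Fin 4`:
the simple graph with these edges is connected, acyclic, and every vertex
has degree (number of neighbors) at most 2. -/
def IsSpanningPath (s : Set (Sym2 (Fin 4))) : Prop :=
  (SimpleGraph.fromEdgeSet s).Connected ∧
  (SimpleGraph.fromEdgeSet s).IsAcyclic ∧
  ∀ v : Fin 4, ((SimpleGraph.fromEdgeSet s).neighborSet v).ncard ≤ 2

/-- The three monochromatic spanning paths of the counterexample. -/
def pathClass : Fin 3 → Set (Sym2 (Fin 4)) :=
  ![{s(0, 2), s(2, 3), s(1, 3)},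
    {s(0, 1), s(1, 2), s(2, 3)},
    {s(0, 3), s(1, 2), s(2, 3)}]

theorem IsSpanningPath.exists_mem {s : Set (Sym2 (Fin 4))} (h : IsSpanningPath s) (v : Fin 4) :
    ∃ e ∈ s, v ∈ e := by
  obtain ⟨w, hw⟩ := h.1.preconnected.exists_adj_of_nontrivial v
  exact ⟨s(v, w), ((SimpleGraph.fromEdgeSet_adj s).1 hw).1, Sym2.mem_mk_left v w⟩

theorem IsSpanningPath.not_star {s : Set (Sym2 (Fin 4))} (h : IsSpanningPath s) (v : Fin 4)
    (hv : ∀ w, w ≠ v → s(v, w) ∈ s) : False := by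
  have hN : (SimpleGraph.fromEdgeSet s).neighborSet v = {v}ᶜ := by
    ext w
    simp only [SimpleGraph.mem_neighborSet, SimpleGraph.fromEdgeSet_adj, Set.mem_compl_iff,
      Set.mem_singleton_iff]
    exact ⟨fun hw => hw.2.symm, fun hw => ⟨hv w hw, Ne.symm hw⟩⟩
  have h2 := h.2.2 v
  rw [hN, Set.ncard_compl, Set.ncard_singleton, Nat.card_eq_fintype_card, Fintype.card_fin] at h2
  omega

theorem paths_to_paths_fails :
    ¬ ∃ p : Fin 3 → Fin 3 → Sym2 (Fin 4),
        (∀ i c, p i c ∈ pathClass c) ∧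
        (∀ c, Function.Injective (fun i => p i c)) ∧
        (∀ c, ∀ e ∈ pathClass c, ∃ i, p i c = e) ∧
        (∀ i, IsSpanningPath {e | ∃ c, e = p i c}) := by
  rintro ⟨p, hmem, -, hsurj, hpath⟩
  obtain ⟨i, h1⟩ := hsurj 1 s(2, 3) (by simp [pathClass])
  have h := hpath i
  have hset : {e | ∃ c, e = p i c} = {p i 0, s(2, 3), p i 2} := by
    ext e
    simp [Fin.exists_fin_succ, h1]
  rw [hset] at h
  have h0 : p i 0 = s(0, 2) ∨ p i 0 = s(2, 3) ∨ p i 0 = s(1, 3) := by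
    simpa [pathClass] using hmem i 0
  have h2 : p i 2 = s(0, 3) ∨ p i 2 = s(1, 2) ∨ p i 2 = s(2, 3) := by
    simpa [pathClass] using hmem i 2
  have e0 := h.exists_mem 0
  have e1 := h.exists_mem 1
  have d2 := h.not_star 2
  have d3 := h.not_star 3
  rcases h0 with h0 | h0 | h0 <;> rcases h2 with h2 | h2 | h2 <;>
    simp only [h0, h2, Set.mem_insert_iff, Set.mem_singleton_iff, exists_eq_or_imp,
      exists_eq_left] at e0 e1 d2 d3 <;>
    first
    | exact absurd e0 (by decide)
    | exact absurd e1 (by decide)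
    | exact d2 (by decide)
    | exact d3 (by decide)
end
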